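/- Let n ≥ 1 and let X : M_n(ℂ) → M_n(ℂ) be a ℂ-linear map. Then tr(adj(M) · X(M)) = 0 for every M ∈ M_n(ℂ) — equivalently, the directional derivative d/dt det(M + t·X(M))|_{t=0} vanishes for every M, i.e., X belongs to the Lie algebra of the symmetry group of the determinant polynomial det_n — if and only if there exist matrices C, D ∈ M_n(ℂ) with tr(C) + tr(D) = 0 such that X(M) = C·M + M·D for all M ∈ M_n(ℂ). -/

import Mathlib

open Matrix in
/-- Second-order consequence of `tr (adj M * X M) = 0`, obtained along the line `S + t E`, on which
the inverse is affine in `t`. -/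
theorem trace_mul_apply_eq_zero_of_sq_zero {ι : Type*} [Fintype ι] [DecidableEq ι]
    {X : Matrix ι ι ℂ →ₗ[ℂ] Matrix ι ι ℂ}
    (hX : ∀ M : Matrix ι ι ℂ, (M.adjugate * X M).trace = 0)
    {S S' E : Matrix ι ι ℂ} (hS : S * S' = 1) (hE : E * S' * E = 0) :
    (S' * E * S' * X E).trace = 0 := by
  have hinv : ∀ M N : Matrix ι ι ℂ, M * N = 1 → (N * X M).trace = 0 := by
    intro M N h
    have hadj : M.adjugate = M.det • N := by
      calc M.adjugate = M.adjugate * (M * N) := by rw [h, mul_one]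
        _ = M.det • N := by rw [← mul_assoc, adjugate_mul, smul_mul_assoc, one_mul]
    have hdet : M.det ≠ 0 := by
      intro h0
      have := congrArg det h
      simp [h0] at this
    have := hX M
    rw [hadj, smul_mul_assoc, trace_smul, smul_eq_mul] at this
    exact (mul_eq_zero.mp this).resolve_left hdet
  have hline : ∀ t : ℂ, ((S' - t • (S' * E * S')) * X (S + t • E)).trace = 0 := by
    intro t
    apply hinv
    have h1 : S * (S' * E * S') = E * S' := by
      rw [← mul_assoc, ← mul_assoc, hS, one_mul]
    have h2 : E * (S' * E * S') = 0 := by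
      rw [← mul_assoc, ← mul_assoc, hE, zero_mul]
    simp [mul_sub, add_mul, h1, h2, hS]
  have h0 := hline 0
  have h1 := hline 1
  have h2 := hline (-1)
  simp only [map_add, map_smul, sub_mul, mul_add, smul_mul_assoc, mul_smul_comm, trace_add,
    trace_sub, trace_smul, smul_eq_mul] at h0 h1 h2
  linear_combination h0 - (1 / 2) * h1 - (1 / 2) * h2

open Matrix in
/-- In a basis adapted to `P` and `Q`, the image of the matrix unit `E_ij` has no entry outside
row `i` and column `j`. -/
theorem conj_apply_single_eq_zero {ι : Type*} [Fintype ι] [DecidableEq ι]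
    {X : Matrix ι ι ℂ →ₗ[ℂ] Matrix ι ι ℂ}
    (hX : ∀ M : Matrix ι ι ℂ, (M.adjugate * X M).trace = 0)
    {P P' Q Q' : Matrix ι ι ℂ} (hP : P * P' = 1) (hQ : Q * Q' = 1)
    {i j k l : ι} (hik : k ≠ i) (hjl : l ≠ j) :
    (P' * X (P * single i j 1 * Q) * Q') k l = 0 := by
  obtain ⟨σ, hσk, hσi⟩ : ∃ σ : Equiv.Perm ι, σ k = j ∧ σ i = l := by
    refine ⟨Equiv.swap (Equiv.swap k j i) l * Equiv.swap k j, ?_, ?_⟩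
    · have : j ≠ Equiv.swap k j i := by
        intro h
        apply hik
        have := congrArg (Equiv.swap k j) h
        simpa using this
      simp [Equiv.swap_apply_of_ne_of_ne this hjl.symm]
    · simp
  set B : Matrix ι ι ℂ := (1 : Matrix ι ι ℂ).submatrix id σ with hB
  set A : Matrix ι ι ℂ := (1 : Matrix ι ι ℂ).submatrix σ id with hA
  have hAB : A * B = 1 := by
    rw [hA, hB, ← submatrix_mul _ _ _ _ _ Function.bijective_id]
    simp
  have hP' : P' * P = 1 := mul_eq_one_comm.mp hP
  have hQ' : Q' * Q = 1 := mul_eq_one_comm.mp hQ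
  have hBi : single i j (1 : ℂ) * B * single i j 1 = 0 := by
    rw [single_mul_mul_single, hB, submatrix_apply, hσi, id, one_apply_ne hjl.symm]
    simp
  have hBE : B * single i j (1 : ℂ) * B = single l k 1 := by
    ext p q
    rw [mul_assoc, mul_apply, Finset.sum_eq_single i]
    · by_cases hq : q = k
      · subst hq
        simp [hB, hσi, hσk, one_apply, single_apply, eq_comm]
      · have : j ≠ σ q := by
          rw [← hσk]
          exact fun h => hq (σ.injective h).symm
        simp [hB, hσi, one_apply, Ne.symm hq, this]
    · intro b _ hb
      simp [hb]
    · simp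
  have key := trace_mul_apply_eq_zero_of_sq_zero hX (S := P * A * Q) (S' := Q' * B * P')
    (E := P * single i j 1 * Q)
    (by
      calc P * A * Q * (Q' * B * P') = P * A * (Q * Q') * B * P' := by simp only [mul_assoc]
        _ = P * (A * B) * P' := by rw [hQ]; simp only [mul_assoc, mul_one]
        _ = 1 := by rw [hAB, mul_one, hP])
    (by
      calc P * single i j 1 * Q * (Q' * B * P') * (P * single i j 1 * Q)
          = P * single i j 1 * (Q * Q') * B * (P' * P) * single i j 1 * Q := by
            simp only [mul_assoc]
        _ = P * (single i j 1 * B * single i j 1) * Q := by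
            rw [hQ, hP']; simp only [mul_assoc, mul_one]
        _ = 0 := by rw [hBi, mul_zero, zero_mul])
  have hS : Q' * B * P' * (P * single i j 1 * Q) * (Q' * B * P') = Q' * single l k 1 * P' := by
    calc Q' * B * P' * (P * single i j 1 * Q) * (Q' * B * P')
        = Q' * B * (P' * P) * single i j 1 * (Q * Q') * B * P' := by simp only [mul_assoc]
      _ = Q' * (B * single i j 1 * B) * P' := by
          rw [hQ, hP']; simp only [mul_assoc, mul_one]
      _ = _ := by rw [hBE]
  rw [hS] at key
  generalize X (P * single i j 1 * Q) = Y at key ⊢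
  rw [mul_assoc, mul_assoc, trace_mul_comm, mul_assoc, trace_single_mul] at key
  simpa using key

open Matrix in
/-- Coordinate relations satisfied by a linear map annihilating the determinant. -/
theorem apply_single_relation {ι : Type*} [Fintype ι] [DecidableEq ι]
    {X : Matrix ι ι ℂ →ₗ[ℂ] Matrix ι ι ℂ}
    (hX : ∀ M : Matrix ι ι ℂ, (M.adjugate * X M).trace = 0)
    {i j k l : ι} (hik : k ≠ i) (hjl : l ≠ j) (s t : ℂ) {Y : Matrix ι ι ℂ}
    (hY : Y = X (single i j 1) + s • X (single k j 1) + t • X (single i l 1) +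
      (s * t) • X (single k l 1)) :
    Y k l - s * Y i l - t * Y k j + s * t * Y i j = 0 := by
  have h := conj_apply_single_eq_zero hX (P := transvection k i s) (P' := transvection k i (-s))
    (Q := transvection j l t) (Q' := transvection j l (-t))
    (by rw [transvection_mul_transvection_same _ _ hik]; simp)
    (by rw [transvection_mul_transvection_same _ _ hjl.symm]; simp) hik hjl
  have hE : transvection k i s * single i j 1 * transvection j l t =
      single i j 1 + s • single k j 1 + t • single i l 1 + (s * t) • single k l (1 : ℂ) := by
    simp only [transvection, add_mul, mul_add, one_mul, mul_one, single_mul_single_same,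
      smul_single, smul_eq_mul]
    abel
  rw [hE] at h
  simp only [map_add, map_smul] at h
  rw [← hY] at h
  rw [mul_transvection_apply_same, transvection_mul_apply_same, transvection_mul_apply_same] at h
  linear_combination h

open Matrix in
/-- A linear map annihilating the determinant is a sum of a left and a right multiplication. -/
theorem exists_eq_mul_add_mul {ι : Type*} [Fintype ι] [DecidableEq ι] [Nonempty ι]
    {X : Matrix ι ι ℂ →ₗ[ℂ] Matrix ι ι ℂ}
    (hX : ∀ M : Matrix ι ι ℂ, (M.adjugate * X M).trace = 0) :
    ∃ C D : Matrix ι ι ℂ, ∀ M, X M = C * M + M * D := by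
  obtain ⟨z⟩ := ‹Nonempty ι›
  have hoff : ∀ {i j k l : ι}, k ≠ i → l ≠ j → X (single i j 1) k l = 0 := by
    intro i j k l hik hjl
    simpa using apply_single_relation hX hik hjl 0 0 rfl
  have hcol : ∀ {i k : ι} (j l : ι), k ≠ i → X (single i j 1) k j = X (single i l 1) k l := by
    intro i k j l hik
    rcases eq_or_ne l j with rfl | hjl
    · rfl
    · have h := apply_single_relation hX hik hjl 0 1 rfl
      simp [hoff hik hjl, hoff hik hjl.symm] at h
      linear_combination -h
  have hrow : ∀ {j l : ι} (i k : ι), l ≠ j → X (single i j 1) i l = X (single k j 1) k l := by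
    intro j l i k hjl
    rcases eq_or_ne k i with rfl | hik
    · rfl
    · have h := apply_single_relation hX hik hjl 1 0 rfl
      simp [hoff hik hjl, hoff hik.symm hjl] at h
      linear_combination -h
  have hdiag : ∀ i j k l : ι, X (single i j 1) i j + X (single k l 1) k l =
      X (single i l 1) i l + X (single k j 1) k j := by
    intro i j k l
    rcases eq_or_ne k i with rfl | hik
    · ring
    rcases eq_or_ne l j with rfl | hjl
    · ring
    have h := apply_single_relation hX hik hjl 1 1 rfl
    simp [hoff hik hjl, hoff hik.symm hjl, hoff hik hjl.symm, hoff hik.symm hjl.symm] at h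
    linear_combination h - hcol l j hik + hcol l j hik.symm - hrow k i hjl + hrow k i hjl.symm
  set C : Matrix ι ι ℂ := of fun p i => X (single i z 1) p z with hC
  set D : Matrix ι ι ℂ := of fun j q =>
    X (single z j 1) z q - if j = q then X (single z z 1) z z else 0 with hD
  refine ⟨C, D, ?_⟩
  have hlin : X = LinearMap.mulLeft ℂ C + LinearMap.mulRight ℂ D := by
    refine Matrix.ext_linearMap _ fun i j => LinearMap.ext_ring ?_
    ext p q
    simp only [LinearMap.comp_apply, LinearMap.add_apply, LinearMap.mulLeft_apply,
      LinearMap.mulRight_apply, singleLinearMap_apply, Matrix.add_apply]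
    rcases eq_or_ne p i with rfl | hp <;> rcases eq_or_ne q j with rfl | hq
    · simp [hC, hD]
      linear_combination hdiag p q z z
    · simp [hC, hD, hq, hq.symm]
      exact hrow p z hq
    · simp [hC, hD, hp]
      exact hcol q z hp
    · simp [hp, hq, hoff hp hq]
  intro M
  simpa using LinearMap.congr_fun hlin M

/-- A linear map `X : M_n(ℂ) → M_n(ℂ)` lies in the Lie algebra of the
symmetry group of the determinant — i.e. `tr(adj(M) · X(M)) = 0` for all `M`, which is the
vanishing of the directional derivative `d/dt det(M + t·X(M))|_{t=0}` — iff
`X(M) = C·M + M·D` for some fixed matrices `C, D` with `tr C + tr D = 0`. -/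
theorem stmt_10 (n : ℕ) (hn : 1 ≤ n)
    (X : Matrix (Fin n) (Fin n) ℂ →ₗ[ℂ] Matrix (Fin n) (Fin n) ℂ) :
    (∀ M : Matrix (Fin n) (Fin n) ℂ, (M.adjugate * X M).trace = 0) ↔
      ∃ C D : Matrix (Fin n) (Fin n) ℂ, C.trace + D.trace = 0 ∧
        ∀ M : Matrix (Fin n) (Fin n) ℂ, X M = C * M + M * D := by
  constructor
  · intro hX
    have : Nonempty (Fin n) := ⟨⟨0, hn⟩⟩
    obtain ⟨C, D, h⟩ := exists_eq_mul_add_mul hX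
    refine ⟨C, D, ?_, h⟩
    simpa [h] using hX 1
  · rintro ⟨C, D, htr, h⟩ M
    rw [h, mul_add, Matrix.trace_add, Matrix.trace_mul_comm, mul_assoc, Matrix.mul_adjugate,
      ← mul_assoc, Matrix.adjugate_mul]
    simp [← mul_add, htr]
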